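/- Suppose there exist a diagonal positive definite P ∈ ℝ^{n×n}, a diagonal positive definite T ∈ ℝ^{m×m}, scalars μ, χ, α > 0, and a symmetric positive definite Γ ∈ ℝ^{n×n} satisfying conditions (C1), (C2), (C3). Let T₀ > 0, let X : [0,T₀] × [0,1] → ℝⁿ be continuously differentiable and d : [0,T₀] × [0,1] → ℝ^q continuous, such that ∂ₜX(t,z) + Λ ∂_zX(t,z) = N d(t,z) for all (t,z) ∈ [0,T₀] × [0,1] and X(t,0) = H_cl X(t,1) + Bφ(K X(t,1)) for all t ∈ [0,T₀]. Then for all t ∈ [0,T₀], (∫₀¹ |X(t,z)|² dz)^{1/2} ≤ √(λ_max(P)/λ_min(P))·e^{μ/2}·e^{−(α/2)t}·(∫₀¹ |X(0,z)|² dz)^{1/2} + (χ e^{μ/2}/√(λ_min(P)))·(∫₀ᵗ ∫₀¹ |d(θ,z)|² dz dθ)^{1/2}. -/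

import Mathlib

open Matrix Set

/-- Componentwise saturation function with saturation levels `ubar`. -/
noncomputable def saturate {m : ℕ} (ubar : Fin m → ℝ) (u : Fin m → ℝ) : Fin m → ℝ :=
  fun i => min |u i| (ubar i) * Real.sign (u i)

/-- Dead-zone nonlinearity `φ(u) = σ(u) - u`. -/
noncomputable def deadzone {m : ℕ} (ubar : Fin m → ℝ) (u : Fin m → ℝ) : Fin m → ℝ :=
  saturate ubar u - u

/-- The Euclidean norm on `ℝ^q`. -/
noncomputable def enorm' {q : ℕ} (x : Fin q → ℝ) : ℝ := Real.sqrt (∑ i, (x i) ^ 2)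

open MeasureTheory in
lemma iss_fubini (a : ℝ) (ha : 0 ≤ a) (g gt D : ℝ → ℝ → ℝ)
    (hg : ContinuousOn (fun p : ℝ × ℝ => g p.1 p.2) (Icc 0 a ×ˢ Icc (0:ℝ) 1))
    (hgt : ContinuousOn (fun p : ℝ × ℝ => gt p.1 p.2) (Icc 0 a ×ˢ Icc (0:ℝ) 1))
    (hD : ContinuousOn (fun p : ℝ × ℝ => D p.1 p.2) (Icc 0 a ×ˢ Icc (0:ℝ) 1))
    (hder : ∀ s ∈ Ioo (0:ℝ) a, ∀ z ∈ Icc (0:ℝ) 1, HasDerivAt (fun s => g s z) (gt s z) s)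
    (hle : ∀ s ∈ Icc (0:ℝ) a, ∫ z in (0:ℝ)..1, gt s z ≤ ∫ z in (0:ℝ)..1, D s z) :
    ∫ z in (0:ℝ)..1, g a z ≤ (∫ z in (0:ℝ)..1, g 0 z) +
      ∫ s in (0:ℝ)..a, ∫ z in (0:ℝ)..1, D s z := by
  have sub : uIoc 0 a ×ˢ uIoc (0:ℝ) 1 ⊆ Icc 0 a ×ˢ Icc (0:ℝ) 1 := by
    rw [uIoc_of_le ha, uIoc_of_le zero_le_one]
    exact prod_mono Ioc_subset_Icc_self Ioc_subset_Icc_self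
  have int2 : ∀ F : ℝ → ℝ → ℝ,
      ContinuousOn (fun p : ℝ × ℝ => F p.1 p.2) (Icc 0 a ×ˢ Icc (0:ℝ) 1) →
      IntegrableOn F.uncurry (uIoc 0 a ×ˢ uIoc (0:ℝ) 1) := fun F hF =>
    (ContinuousOn.integrableOn_compact (isCompact_Icc.prod isCompact_Icc) hF).mono_set sub
  have int1 : ∀ F : ℝ → ℝ → ℝ,
      ContinuousOn (fun p : ℝ × ℝ => F p.1 p.2) (Icc 0 a ×ˢ Icc (0:ℝ) 1) →
      IntervalIntegrable (fun s => ∫ z in (0:ℝ)..1, F s z) volume 0 a := by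
    intro F hF
    have h := int2 F hF
    rw [IntegrableOn, Measure.volume_eq_prod, ← Measure.prod_restrict] at h
    have h2 := h.integral_prod_left
    rw [intervalIntegrable_iff]
    simpa [IntegrableOn, intervalIntegral.integral_of_le, uIoc_of_le] using h2
  have sl : ∀ F : ℝ → ℝ → ℝ,
      ContinuousOn (fun p : ℝ × ℝ => F p.1 p.2) (Icc 0 a ×ˢ Icc (0:ℝ) 1) →
      ∀ s ∈ Icc 0 a, IntervalIntegrable (fun z => F s z) volume 0 1 := by
    intro F hF s hs
    apply ContinuousOn.intervalIntegrable
    rw [uIcc_of_le zero_le_one]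
    exact hF.comp (f := fun z => (s, z)) (by fun_prop) (fun z hz => ⟨hs, hz⟩)
  have e : ∫ z in (0:ℝ)..1, (g a z - g 0 z) = ∫ z in (0:ℝ)..1, ∫ s in (0:ℝ)..a, gt s z := by
    apply intervalIntegral.integral_congr
    intro z hz
    rw [uIcc_of_le zero_le_one] at hz
    refine (intervalIntegral.integral_eq_sub_of_hasDerivAt_of_le (f := fun s => g s z) ha ?_ (fun s hs => hder s hs z hz) ?_).symm
    · exact hg.comp (f := fun s => (s, z)) (by fun_prop) (fun s hs => ⟨hs, hz⟩)
    · apply ContinuousOn.intervalIntegrable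
      rw [uIcc_of_le ha]
      exact hgt.comp (f := fun s => (s, z)) (by fun_prop) (fun s hs => ⟨hs, hz⟩)
  rw [← intervalIntegral_intervalIntegral_swap (int2 gt hgt),
    intervalIntegral.integral_sub (sl g hg a ⟨ha, le_rfl⟩) (sl g hg 0 ⟨le_rfl, ha⟩)] at e
  have := intervalIntegral.integral_mono_on ha (int1 gt hgt) (int1 D hD) hle
  linarith

lemma iss_dot_t {a b : ℕ} (A : Matrix (Fin a) (Fin b) ℝ) (x : Fin b → ℝ) (w : Fin a → ℝ) :
    x ⬝ᵥ (Aᵀ *ᵥ w) = (A *ᵥ x) ⬝ᵥ w := by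
  rw [Matrix.mulVec_transpose, dotProduct_comm, ← Matrix.dotProduct_mulVec, dotProduct_comm]

lemma iss_dead {m : ℕ} (ubar : Fin m → ℝ) (hubar : ∀ i, 0 < ubar i) (u : Fin m → ℝ) (i : Fin m) :
    deadzone ubar u i * (deadzone ubar u i + u i) ≤ 0 := by
  have hb := hubar i
  simp only [deadzone, saturate, Pi.sub_apply]
  rcases lt_trichotomy (u i) 0 with h | h | h
  · rw [Real.sign_of_neg h, abs_of_neg h]
    rcases min_cases (-(u i)) (ubar i) with ⟨h1, h2⟩ | ⟨h1, h2⟩ <;> rw [h1] <;> nlinarith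
  · simp [h]
  · rw [Real.sign_of_pos h, abs_of_pos h]
    rcases min_cases (u i) (ubar i) with ⟨h1, h2⟩ | ⟨h1, h2⟩ <;> rw [h1] <;> nlinarith

lemma iss_bdry {n m : ℕ} (p l : Fin n → ℝ) (τ : Fin m → ℝ) (hτ : ∀ i, 0 < τ i)
    (A : Matrix (Fin n) (Fin n) ℝ) (B : Matrix (Fin n) (Fin m) ℝ) (K : Matrix (Fin m) (Fin n) ℝ)
    (e : ℝ) (x : Fin n → ℝ) (φ : Fin m → ℝ)
    (hC1 : (-(Matrix.fromBlocks
        (Aᵀ * diagonal p * diagonal l * A - e • (diagonal p * diagonal l))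
        (Aᵀ * diagonal p * diagonal l * B - Kᵀ * diagonal τ)
        (Bᵀ * diagonal p * diagonal l * A - diagonal τ * K)
        (Bᵀ * diagonal p * diagonal l * B - 2 • diagonal τ))).PosSemidef)
    (hφ : ∀ i, φ i * (φ i + (K *ᵥ x) i) ≤ 0) :
    ∑ i, p i * l i * ((A *ᵥ x + B *ᵥ φ) i) ^ 2 ≤ e * ∑ i, p i * l i * x i ^ 2 := by
  have h := hC1.dotProduct_mulVec_nonneg (Sum.elim x φ)
  have hs : ∑ i, τ i * (φ i * (φ i + (K *ᵥ x) i)) ≤ 0 :=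
    Finset.sum_nonpos fun i _ => mul_nonpos_of_nonneg_of_nonpos (hτ i).le (hφ i)
  have hst : star (Sum.elim x φ) = Sum.elim x φ := by ext i; simp
  rw [hst, Matrix.neg_mulVec, Matrix.fromBlocks_mulVec] at h
  simp only [Matrix.mul_assoc, Matrix.sub_mulVec, ← Matrix.mulVec_mulVec, dotProduct_neg,
    Sum.elim_comp_inl, Sum.elim_comp_inr, sumElim_dotProduct_sumElim, dotProduct_add,
    dotProduct_sub, iss_dot_t, Matrix.smul_mulVec, dotProduct_smul] at h
  simp only [dotProduct, mulVec_diagonal, smul_eq_mul, nsmul_eq_mul, Nat.cast_ofNat] at h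
  simp only [Pi.add_apply]
  have e1 : ∑ i, p i * l i * ((A *ᵥ x) i + (B *ᵥ φ) i) ^ 2
    = ∑ i, (A *ᵥ x) i * (p i * (l i * (A *ᵥ x) i)) + ∑ i, (A *ᵥ x) i * (p i * (l i * (B *ᵥ φ) i))
     + ∑ i, (B *ᵥ φ) i * (p i * (l i * (A *ᵥ x) i)) + ∑ i, (B *ᵥ φ) i * (p i * (l i * (B *ᵥ φ) i)) := by
    simp only [← Finset.sum_add_distrib]
    exact Finset.sum_congr rfl fun i _ => by ring
  have e2 : ∑ i, p i * l i * x i ^ 2 = ∑ i, x i * (p i * (l i * x i)) :=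
    Finset.sum_congr rfl fun i _ => by ring
  have e3 : 2 * ∑ i, τ i * (φ i * (φ i + (K *ᵥ x) i)) = 2 * ∑ i, φ i * (τ i * φ i)
     + ∑ i, φ i * (τ i * (K *ᵥ x) i) + ∑ i, (K *ᵥ x) i * (τ i * φ i) := by
    simp only [← Finset.sum_add_distrib, Finset.mul_sum]
    exact Finset.sum_congr rfl fun i _ => by ring
  rw [e1, e2]
  linarith

lemma iss_int {n q : ℕ} (p l : Fin n → ℝ) (N : Matrix (Fin n) (Fin q) ℝ)
    (Γ : Matrix (Fin n) (Fin n) ℝ) (μ χ α : ℝ)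
    (hC2 : (Matrix.fromBlocks Γ (diagonal p * N) (Nᵀ * diagonal p)
        (χ ^ 2 • (1 : Matrix (Fin q) (Fin q) ℝ))).PosSemidef)
    (hC3 : (-(diagonal p * (α • (1 : Matrix (Fin n) (Fin n) ℝ) - μ • diagonal l) + Γ)).PosSemidef)
    (x : Fin n → ℝ) (d : Fin q → ℝ) :
    α * ∑ i, p i * x i ^ 2 - μ * ∑ i, p i * l i * x i ^ 2 + 2 * ∑ i, p i * x i * (N *ᵥ d) i
      ≤ χ ^ 2 * ∑ i, d i ^ 2 := by
  have h := hC2.dotProduct_mulVec_nonneg (Sum.elim x (-d))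
  have h3 := hC3.dotProduct_mulVec_nonneg x
  have hst : star (Sum.elim x (-d)) = Sum.elim x (-d) := by ext i; simp
  have hst' : star x = x := by ext i; simp
  rw [hst, Matrix.fromBlocks_mulVec] at h
  rw [hst'] at h3
  simp only [Matrix.sub_mulVec, ← Matrix.mulVec_mulVec, dotProduct_neg, neg_mulVec, mulVec_neg,
    Sum.elim_comp_inl, Sum.elim_comp_inr, sumElim_dotProduct_sumElim, dotProduct_add, neg_dotProduct,
    Matrix.add_mulVec, one_mulVec, mulVec_sub, mulVec_smul,
    dotProduct_sub, iss_dot_t, Matrix.smul_mulVec, dotProduct_smul] at h h3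
  generalize x ⬝ᵥ Γ *ᵥ x = G at h h3
  simp only [dotProduct, mulVec_diagonal, smul_eq_mul] at h h3
  have e1 : ∑ i, p i * x i ^ 2 = ∑ i, x i * (p i * x i) := Finset.sum_congr rfl fun i _ => by ring
  have e2 : ∑ i, p i * l i * x i ^ 2 = ∑ i, x i * (p i * (l i * x i)) :=
    Finset.sum_congr rfl fun i _ => by ring
  have e3 : ∑ i, p i * x i * (N *ᵥ d) i = ∑ i, x i * (p i * (N *ᵥ d) i) :=
    Finset.sum_congr rfl fun i _ => by ring
  have e4 : ∑ i, x i * (p i * (N *ᵥ d) i) = ∑ i, (N *ᵥ d) i * (p i * x i) :=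
    Finset.sum_congr rfl fun i _ => by ring
  have e5 : ∑ i, d i ^ 2 = ∑ i, d i * d i := Finset.sum_congr rfl fun i _ => by ring
  rw [e1, e2, e3, e5]
  linarith

lemma iss_final (E E0 D0 m M μ α χ t : ℝ) (hm : 0 < m) (hM : 0 ≤ M) (hχ : 0 < χ)
    (hE0 : 0 ≤ E0) (hD0 : 0 ≤ D0)
    (h : Real.exp (α * t) * (m * Real.exp (-μ) * E) ≤ M * E0 + Real.exp (α * t) * χ ^ 2 * D0) :
    Real.sqrt E ≤ Real.sqrt (M / m) * Real.exp (μ / 2) * Real.exp (-(α / 2) * t) * Real.sqrt E0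
      + (χ * Real.exp (μ / 2) / Real.sqrt m) * Real.sqrt D0 := by
  rw [Real.sqrt_le_left (by positivity)]
  have e1 : Real.exp (μ / 2) ^ 2 = Real.exp μ := by rw [← Real.exp_nat_mul]; congr 1; push_cast; ring
  have e2 : Real.exp (-(α / 2) * t) ^ 2 = (Real.exp (α * t))⁻¹ := by
    rw [← Real.exp_nat_mul, ← Real.exp_neg]; congr 1; push_cast; ring
  have hsq : (Real.sqrt (M / m) * Real.exp (μ / 2) * Real.exp (-(α / 2) * t) * Real.sqrt E0) ^ 2
     + ((χ * Real.exp (μ / 2) / Real.sqrt m) * Real.sqrt D0) ^ 2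
     = M / m * Real.exp μ * (Real.exp (α * t))⁻¹ * E0 + χ ^ 2 * Real.exp μ / m * D0 := by
    simp only [mul_pow, div_pow, e1, e2]
    rw [Real.sq_sqrt (by positivity), Real.sq_sqrt hE0, Real.sq_sqrt hm.le, Real.sq_sqrt hD0]
  have hE : E ≤ M / m * Real.exp μ * (Real.exp (α * t))⁻¹ * E0 + χ ^ 2 * Real.exp μ / m * D0 := by
    have hc : 0 < Real.exp (α * t) * (m * Real.exp (-μ)) := by positivity
    refine le_of_mul_le_mul_left ?_ hc
    calc _ = Real.exp (α * t) * (m * Real.exp (-μ) * E) := by ring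
      _ ≤ _ := h
      _ = _ := by rw [Real.exp_neg]; field_simp
  have h1 : 0 ≤ Real.sqrt (M / m) * Real.exp (μ / 2) * Real.exp (-(α / 2) * t) * Real.sqrt E0 := by
    positivity
  have h2 : 0 ≤ (χ * Real.exp (μ / 2) / Real.sqrt m) * Real.sqrt D0 := by positivity
  nlinarith [mul_nonneg h1 h2]

lemma iss_enorm {q : ℕ} (x : Fin q → ℝ) : enorm' x ^ 2 = ∑ i, x i ^ 2 :=
  Real.sq_sqrt (Finset.sum_nonneg fun i _ => sq_nonneg _)

/-- weighted quadratic form along a curve -/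
lemma iss_deriv {n : ℕ} (w : Fin n → ℝ) (c : ℝ) (x : ℝ → Fin n → ℝ) (x' : Fin n → ℝ) (s : ℝ)
    (h : HasDerivAt x x' s) :
    HasDerivAt (fun s => Real.exp (c * s) * ∑ i, w i * x s i ^ 2)
      (Real.exp (c * s) * (c * ∑ i, w i * x s i ^ 2 + 2 * ∑ i, w i * x s i * x' i)) s := by
  have h1 : HasDerivAt (fun s => Real.exp (c * s)) (Real.exp (c * s) * c) s := by
    simpa using ((hasDerivAt_id s).const_mul c).exp
  have h2 : HasDerivAt (fun s => ∑ i, w i * x s i ^ 2) (∑ i, w i * (2 * x s i * x' i)) s := by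
    apply HasDerivAt.fun_sum
    intro i _
    have := ((hasDerivAt_pi.1 h i).fun_pow 2).const_mul (w i)
    simpa using this
  have : ∑ i, w i * (2 * x s i * x' i) = 2 * ∑ i, w i * x s i * x' i := by
    rw [Finset.mul_sum]; exact Finset.sum_congr rfl fun i _ => by ring
  refine (h1.mul h2).congr_deriv ?_
  rw [this]; ring

lemma iss_cont {n : ℕ} {Y : Type*} [TopologicalSpace Y] {S : Set Y} (w : Fin n → ℝ)
    (x y : Y → Fin n → ℝ) (hx : ContinuousOn x S) (hy : ContinuousOn y S) :
    ContinuousOn (fun s => ∑ i, w i * x s i * y s i) S := by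
  apply continuousOn_finsetSum
  intro i _
  exact (continuousOn_const.mul (continuousOn_pi.1 hx i)).mul (continuousOn_pi.1 hy i)

lemma iss_cont2 {n : ℕ} {Y : Type*} [TopologicalSpace Y] {S : Set Y} (w : Fin n → ℝ)
    (x : Y → Fin n → ℝ) (hx : ContinuousOn x S) :
    ContinuousOn (fun s => ∑ i, w i * x s i ^ 2) S := by
  refine (iss_cont w x x hx hx).congr fun s _ => Finset.sum_congr rfl fun i _ => by ring

lemma iss_cont3 {n : ℕ} {Y : Type*} [TopologicalSpace Y] {S : Set Y}
    (x : Y → Fin n → ℝ) (hx : ContinuousOn x S) :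
    ContinuousOn (fun s => ∑ i, x s i ^ 2) S := by
  simpa using iss_cont2 (fun _ => 1) x hx

open MeasureTheory in
/-- The spatial step: integrate by parts at fixed time. -/
lemma iss_slice {n q : ℕ} (p l : Fin n → ℝ) (μ χ α : ℝ) (hμ : 0 < μ)
    (x xt xz : ℝ → Fin n → ℝ) (nd : ℝ → Fin n → ℝ) (d : ℝ → Fin q → ℝ)
    (hx : ContinuousOn x (Icc 0 1)) (hxt : ContinuousOn xt (Icc 0 1))
    (hxz : ContinuousOn xz (Icc 0 1)) (hd : ContinuousOn d (Icc 0 1))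
    (hder : ∀ z ∈ Ioo (0:ℝ) 1, HasDerivAt x (xz z) z)
    (hpde : ∀ z ∈ Icc (0:ℝ) 1, ∀ i, xt z i + l i * xz z i = nd z i)
    (hb : ∑ i, p i * l i * x 0 i ^ 2 ≤ Real.exp (-μ) * ∑ i, p i * l i * x 1 i ^ 2)
    (hi : ∀ z ∈ Icc (0:ℝ) 1, α * ∑ i, p i * x z i ^ 2 - μ * ∑ i, p i * l i * x z i ^ 2
      + 2 * ∑ i, p i * x z i * nd z i ≤ χ ^ 2 * ∑ i, d z i ^ 2) :
    ∫ z in (0:ℝ)..1, Real.exp (-μ * z) * (α * ∑ i, p i * x z i ^ 2 + 2 * ∑ i, p i * x z i * xt z i)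
      ≤ ∫ z in (0:ℝ)..1, χ ^ 2 * ∑ i, d z i ^ 2 := by
  have hexp : ContinuousOn (fun z : ℝ => Real.exp (-μ * z)) (Icc 0 1) := by fun_prop
  have c1 := iss_cont2 p x hx
  have c2 := iss_cont2 (fun i => p i * l i) x hx
  have c3 := iss_cont p x xt hx hxt
  have c4 := iss_cont (fun i => p i * l i) x xz hx hxz
  have c5 := iss_cont3 d hd
  have hH' : ContinuousOn (fun z => Real.exp (-μ * z) * (-μ * ∑ i, p i * l i * x z i ^ 2
      + 2 * ∑ i, p i * l i * x z i * xz z i)) (Icc 0 1) :=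
    hexp.mul ((continuousOn_const.mul c2).add (continuousOn_const.mul c4))
  have ii : ∀ f : ℝ → ℝ, ContinuousOn f (Icc 0 1) → IntervalIntegrable f volume 0 1 := by
    intro f hf
    apply ContinuousOn.intervalIntegrable
    rwa [uIcc_of_le zero_le_one]
  have ftc := intervalIntegral.integral_eq_sub_of_hasDerivAt_of_le
    (f := fun z => Real.exp (-μ * z) * ∑ i, p i * l i * x z i ^ 2) zero_le_one
    (hexp.mul c2) (fun z hz => iss_deriv (fun i => p i * l i) (-μ) x (xz z) z (hder z hz)) (ii _ hH')
  have mono := intervalIntegral.integral_mono_on (μ := volume) (a := (0:ℝ)) (b := 1)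
    (f := fun z => Real.exp (-μ * z) * (α * ∑ i, p i * x z i ^ 2 + 2 * ∑ i, p i * x z i * xt z i)
      + Real.exp (-μ * z) * (-μ * ∑ i, p i * l i * x z i ^ 2
      + 2 * ∑ i, p i * l i * x z i * xz z i))
    (g := fun z => χ ^ 2 * ∑ i, d z i ^ 2) zero_le_one
    (ii _ ((hexp.mul ((continuousOn_const.mul c1).add (continuousOn_const.mul c3))).add hH'))
    (ii _ (continuousOn_const.mul c5)) (by
      intro z hz
      have h1 := hi z hz
      have e : ∑ i, p i * x z i * nd z i
        = ∑ i, p i * x z i * xt z i + ∑ i, p i * l i * x z i * xz z i := by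
        rw [← Finset.sum_add_distrib]
        exact Finset.sum_congr rfl fun i _ => by rw [← hpde z hz i]; ring
      have h0 : 0 ≤ χ ^ 2 * ∑ i, d z i ^ 2 :=
        mul_nonneg (sq_nonneg _) (Finset.sum_nonneg fun i _ => sq_nonneg _)
      have h2 : Real.exp (-μ * z) ≤ 1 := Real.exp_le_one_iff.2 (by nlinarith [hz.1])
      have h3 := Real.exp_pos (-μ * z)
      rw [e] at h1
      calc _ = Real.exp (-μ * z) * (α * ∑ i, p i * x z i ^ 2 - μ * ∑ i, p i * l i * x z i ^ 2
      + 2 * (∑ i, p i * x z i * xt z i + ∑ i, p i * l i * x z i * xz z i)) := by ring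
        _ ≤ Real.exp (-μ * z) * (χ ^ 2 * ∑ i, d z i ^ 2) := mul_le_mul_of_nonneg_left h1 h3.le
        _ ≤ _ := mul_le_of_le_one_left h0 h2)
  have hG : ContinuousOn (fun z => Real.exp (-μ * z) * (α * ∑ i, p i * x z i ^ 2
      + 2 * ∑ i, p i * x z i * xt z i)) (Icc 0 1) :=
    hexp.mul ((continuousOn_const.mul c1).add (continuousOn_const.mul c3))
  rw [intervalIntegral.integral_add (ii _ hG) (ii _ hH'),
    ftc] at mono
  simp only [mul_one, mul_zero, Real.exp_zero, one_mul] at mono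
  linarith

/-- under the matrix inequalities (C1), (C2), (C3), every classical solution of
`∂ₜX + Λ∂_zX = Nd` with the saturated boundary condition satisfies the ISS bound
`‖X(t)‖_{L²} ≤ √(λ_max(P)/λ_min(P)) e^{μ/2} e^{-(α/2)t} ‖X(0)‖_{L²}
  + (χ e^{μ/2}/√λ_min(P)) (∫₀ᵗ ‖d(θ)‖²_{L²} dθ)^{1/2}`.
Here `P` is diagonal, so `λ_min(P) = ⨅ i, P i i` and `λ_max(P) = ⨆ i, P i i`. -/
theorem classical_ISS {n m q : ℕ}
    (Λ : Matrix (Fin n) (Fin n) ℝ) (hΛdiag : Λ.IsDiag) (hΛpos : ∀ i, 0 < Λ i i)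
    (H : Matrix (Fin n) (Fin n) ℝ) (B : Matrix (Fin n) (Fin m) ℝ)
    (N : Matrix (Fin n) (Fin q) ℝ) (K : Matrix (Fin m) (Fin n) ℝ)
    (ubar : Fin m → ℝ) (hubar : ∀ i, 0 < ubar i)
    (P : Matrix (Fin n) (Fin n) ℝ) (hPdiag : P.IsDiag) (hPpos : ∀ i, 0 < P i i)
    (T : Matrix (Fin m) (Fin m) ℝ) (hTdiag : T.IsDiag) (hTpos : ∀ i, 0 < T i i)
    (μ χ α : ℝ) (hμ : 0 < μ) (hχ : 0 < χ) (hα : 0 < α)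
    (Γ : Matrix (Fin n) (Fin n) ℝ) (hΓsymm : Γ.IsSymm) (hΓpos : Γ.PosDef)
    (hC1 : (-(Matrix.fromBlocks
        ((H + B * K)ᵀ * P * Λ * (H + B * K) - Real.exp (-μ) • (P * Λ))
        ((H + B * K)ᵀ * P * Λ * B - Kᵀ * T)
        (Bᵀ * P * Λ * (H + B * K) - T * K)
        (Bᵀ * P * Λ * B - 2 • T))).PosSemidef)
    (hC2 : (Matrix.fromBlocks Γ (P * N) (Nᵀ * P)
        (χ ^ 2 • (1 : Matrix (Fin q) (Fin q) ℝ))).PosSemidef)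
    (hC3 : (-(P * (α • (1 : Matrix (Fin n) (Fin n) ℝ) - μ • Λ) + Γ)).PosSemidef)
    (T₀ : ℝ) (hT₀ : 0 < T₀)
    (X Xt Xz : ℝ → ℝ → Fin n → ℝ) (d : ℝ → ℝ → Fin q → ℝ)
    (hXcont : ContinuousOn (fun p : ℝ × ℝ => X p.1 p.2) (Icc 0 T₀ ×ˢ Icc (0:ℝ) 1))
    (hXtcont : ContinuousOn (fun p : ℝ × ℝ => Xt p.1 p.2) (Icc 0 T₀ ×ˢ Icc (0:ℝ) 1))
    (hXzcont : ContinuousOn (fun p : ℝ × ℝ => Xz p.1 p.2) (Icc 0 T₀ ×ˢ Icc (0:ℝ) 1))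
    (hXt : ∀ t ∈ Icc (0:ℝ) T₀, ∀ z ∈ Icc (0:ℝ) 1,
      HasDerivWithinAt (fun s => X s z) (Xt t z) (Icc (0:ℝ) T₀) t)
    (hXz : ∀ t ∈ Icc (0:ℝ) T₀, ∀ z ∈ Icc (0:ℝ) 1,
      HasDerivWithinAt (fun w => X t w) (Xz t z) (Icc (0:ℝ) 1) z)
    (hdcont : ContinuousOn (fun p : ℝ × ℝ => d p.1 p.2) (Icc 0 T₀ ×ˢ Icc (0:ℝ) 1))
    (hpde : ∀ t ∈ Icc (0:ℝ) T₀, ∀ z ∈ Icc (0:ℝ) 1,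
      Xt t z + Λ.mulVec (Xz t z) = N.mulVec (d t z))
    (hbc : ∀ t ∈ Icc (0:ℝ) T₀,
      X t 0 = (H + B * K).mulVec (X t 1) + B.mulVec (deadzone ubar (K.mulVec (X t 1)))) :
    ∀ t ∈ Icc (0:ℝ) T₀,
      Real.sqrt (∫ z in (0:ℝ)..1, enorm' (X t z) ^ 2) ≤
        Real.sqrt ((⨆ i, P i i) / (⨅ i, P i i)) * Real.exp (μ / 2) *
            Real.exp (-(α / 2) * t) * Real.sqrt (∫ z in (0:ℝ)..1, enorm' (X 0 z) ^ 2) +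
          (χ * Real.exp (μ / 2) / Real.sqrt (⨅ i, P i i)) *
            Real.sqrt (∫ θ in (0:ℝ)..t, ∫ z in (0:ℝ)..1, enorm' (d θ z) ^ 2) := by
  intro t ht
  obtain ⟨p, rfl⟩ : ∃ p, P = Matrix.diagonal p := ⟨P.diag, hPdiag.diagonal_diag.symm⟩
  obtain ⟨l, rfl⟩ : ∃ l, Λ = Matrix.diagonal l := ⟨Λ.diag, hΛdiag.diagonal_diag.symm⟩
  obtain ⟨τ, rfl⟩ : ∃ τ, T = Matrix.diagonal τ := ⟨T.diag, hTdiag.diagonal_diag.symm⟩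
  simp only [Matrix.diagonal_apply_eq] at hPpos hΛpos hTpos ⊢
  simp only [iss_enorm]
  rcases Nat.eq_zero_or_pos n with hn | hn
  · subst hn
    simp
  have : Nonempty (Fin n) := ⟨⟨0, hn⟩⟩
  have hm : 0 < ⨅ i, p i := by
    obtain ⟨i, hi⟩ := exists_eq_ciInf_of_finite (f := p)
    rw [← hi]; exact hPpos i
  have hmle : ∀ i, ⨅ i, p i ≤ p i := fun i => ciInf_le (Set.finite_range p).bddBelow i
  have hMge : ∀ i, p i ≤ ⨆ i, p i := fun i => le_ciSup (Set.finite_range p).bddAbove i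
  have hM : 0 ≤ ⨆ i, p i := (hPpos ⟨0, hn⟩).le.trans (hMge _)
  have hsub : Icc 0 t ×ˢ Icc (0:ℝ) 1 ⊆ Icc 0 T₀ ×ˢ Icc (0:ℝ) 1 :=
    prod_mono (Icc_subset_Icc le_rfl ht.2) le_rfl
  have cX := hXcont.mono hsub
  have cXt := hXtcont.mono hsub
  have cd := hdcont.mono hsub
  have slice : ∀ {k : ℕ} (F : ℝ → ℝ → Fin k → ℝ),
      ContinuousOn (fun p : ℝ × ℝ => F p.1 p.2) (Icc 0 T₀ ×ˢ Icc (0:ℝ) 1) →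
      ∀ s ∈ Icc 0 T₀, ContinuousOn (F s) (Icc 0 1) := by
    intro k F hF s hs
    exact hF.comp (f := fun z => (s, z)) (by fun_prop) (fun z hz => ⟨hs, hz⟩)
  have ii : ∀ f : ℝ → ℝ, ContinuousOn f (Icc 0 1) →
      IntervalIntegrable f MeasureTheory.volume 0 1 := by
    intro f hf
    apply ContinuousOn.intervalIntegrable
    rwa [uIcc_of_le zero_le_one]
  have hexp : ContinuousOn (fun z : ℝ => Real.exp (-μ * z)) (Icc 0 1) := by fun_prop
  have c1 : ContinuousOn (fun q : ℝ × ℝ => ∑ i, p i * X q.1 q.2 i ^ 2) (Icc 0 t ×ˢ Icc (0:ℝ) 1) :=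
    iss_cont2 p (fun q : ℝ × ℝ => X q.1 q.2) cX
  have c2 : ContinuousOn (fun q : ℝ × ℝ => ∑ i, p i * X q.1 q.2 i * Xt q.1 q.2 i)
      (Icc 0 t ×ˢ Icc (0:ℝ) 1) :=
    iss_cont p (fun q : ℝ × ℝ => X q.1 q.2) (fun q : ℝ × ℝ => Xt q.1 q.2) cX cXt
  have c3 : ContinuousOn (fun q : ℝ × ℝ => ∑ i, d q.1 q.2 i ^ 2) (Icc 0 t ×ˢ Icc (0:ℝ) 1) :=
    iss_cont3 (fun q : ℝ × ℝ => d q.1 q.2) cd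
  have ce : ContinuousOn (fun q : ℝ × ℝ => Real.exp (-μ * q.2)) (Icc 0 t ×ˢ Icc (0:ℝ) 1) := by
    fun_prop
  have ca : ContinuousOn (fun q : ℝ × ℝ => Real.exp (α * q.1)) (Icc 0 t ×ˢ Icc (0:ℝ) 1) := by
    fun_prop
  have key := iss_fubini t ht.1
    (fun s z => Real.exp (-μ * z) * (Real.exp (α * s) * ∑ i, p i * X s z i ^ 2))
    (fun s z => Real.exp (-μ * z) * (Real.exp (α * s) *
      (α * ∑ i, p i * X s z i ^ 2 + 2 * ∑ i, p i * X s z i * Xt s z i)))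
    (fun s z => Real.exp (α * t) * χ ^ 2 * ∑ i, d s z i ^ 2)
    (ce.mul (ca.mul c1))
    (ce.mul (ca.mul ((continuousOn_const.mul c1).add (continuousOn_const.mul c2))))
    (continuousOn_const.mul c3)
    (by
      intro s hs z hz
      have hs' : s ∈ Ioo 0 T₀ := ⟨hs.1, hs.2.trans_le ht.2⟩
      exact (iss_deriv p α (fun s => X s z) (Xt s z) s
        ((hXt s (Ioo_subset_Icc_self hs') z hz).hasDerivAt (Icc_mem_nhds hs'.1 hs'.2))).const_mul _)
    (by
      intro s hs
      have hs' : s ∈ Icc 0 T₀ := ⟨hs.1, hs.2.trans ht.2⟩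
      have h := iss_slice p l μ χ α hμ (X s) (Xt s) (Xz s) (fun z => N *ᵥ d s z) (d s)
        (slice X hXcont s hs') (slice Xt hXtcont s hs') (slice Xz hXzcont s hs')
        (slice d hdcont s hs')
        (fun z hz => (hXz s hs' z (Ioo_subset_Icc_self hz)).hasDerivAt (Icc_mem_nhds hz.1 hz.2))
        (fun z hz i => by
          have := congrFun (hpde s hs' z hz) i
          simpa [mulVec_diagonal] using this)
        (by
          rw [hbc s hs']
          exact iss_bdry p l τ hTpos _ B K _ _ _ hC1 (fun i => iss_dead ubar hubar _ i))
        (fun z hz => iss_int p l N Γ μ χ α hC2 hC3 _ _)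
      have e1 : ∀ z, Real.exp (-μ * z) * (Real.exp (α * s) *
          (α * ∑ i, p i * X s z i ^ 2 + 2 * ∑ i, p i * X s z i * Xt s z i))
          = Real.exp (α * s) * (Real.exp (-μ * z) *
          (α * ∑ i, p i * X s z i ^ 2 + 2 * ∑ i, p i * X s z i * Xt s z i)) := fun z => by ring
      have e2 : ∀ z, Real.exp (α * t) * χ ^ 2 * ∑ i, d s z i ^ 2
          = Real.exp (α * t) * (χ ^ 2 * ∑ i, d s z i ^ 2) := fun z => by ring
      simp only [e1, e2, intervalIntegral.integral_const_mul] at h ⊢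
      have hst : Real.exp (α * s) ≤ Real.exp (α * t) :=
        Real.exp_le_exp.2 (mul_le_mul_of_nonneg_left hs.2 hα.le)
      have h0 : 0 ≤ χ ^ 2 * ∫ z in (0:ℝ)..1, ∑ i, d s z i ^ 2 :=
        mul_nonneg (sq_nonneg _) (intervalIntegral.integral_nonneg zero_le_one
          fun z _ => Finset.sum_nonneg fun i _ => sq_nonneg _)
      exact (mul_le_mul_of_nonneg_left h (Real.exp_pos _).le).trans
        (mul_le_mul_of_nonneg_right hst h0))
  have ht0 : (0:ℝ) ∈ Icc 0 T₀ := ⟨le_rfl, hT₀.le⟩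
  have lower : (⨅ i, p i) * Real.exp (-μ) * (∫ z in (0:ℝ)..1, ∑ i, X t z i ^ 2)
      ≤ ∫ z in (0:ℝ)..1, Real.exp (-μ * z) * ∑ i, p i * X t z i ^ 2 := by
    rw [← intervalIntegral.integral_const_mul]
    apply intervalIntegral.integral_mono_on zero_le_one
      (ii _ (continuousOn_const.mul (iss_cont3 _ (slice X hXcont t ht))))
      (ii _ (hexp.mul (iss_cont2 p _ (slice X hXcont t ht))))
    intro z hz
    have h1 : (⨅ i, p i) * ∑ i, X t z i ^ 2 ≤ ∑ i, p i * X t z i ^ 2 := by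
      rw [Finset.mul_sum]
      exact Finset.sum_le_sum fun i _ => mul_le_mul_of_nonneg_right (hmle i) (sq_nonneg _)
    have h2 : Real.exp (-μ) ≤ Real.exp (-μ * z) := Real.exp_le_exp.2 (by nlinarith [hz.2])
    have h3 : 0 ≤ (⨅ i, p i) * ∑ i, X t z i ^ 2 :=
      mul_nonneg hm.le (Finset.sum_nonneg fun i _ => sq_nonneg _)
    calc (⨅ i, p i) * Real.exp (-μ) * ∑ i, X t z i ^ 2
        = Real.exp (-μ) * ((⨅ i, p i) * ∑ i, X t z i ^ 2) := by ring
      _ ≤ _ := mul_le_mul h2 h1 h3 (Real.exp_pos _).le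
  have upper : ∫ z in (0:ℝ)..1, Real.exp (-μ * z) * ∑ i, p i * X 0 z i ^ 2
      ≤ (⨆ i, p i) * (∫ z in (0:ℝ)..1, ∑ i, X 0 z i ^ 2) := by
    rw [← intervalIntegral.integral_const_mul]
    apply intervalIntegral.integral_mono_on zero_le_one
      (ii _ (hexp.mul (iss_cont2 p _ (slice X hXcont 0 ht0))))
      (ii _ (continuousOn_const.mul (iss_cont3 _ (slice X hXcont 0 ht0))))
    intro z hz
    have h1 : ∑ i, p i * X 0 z i ^ 2 ≤ (⨆ i, p i) * ∑ i, X 0 z i ^ 2 := by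
      rw [Finset.mul_sum]
      exact Finset.sum_le_sum fun i _ => mul_le_mul_of_nonneg_right (hMge i) (sq_nonneg _)
    have h2 : Real.exp (-μ * z) ≤ 1 := Real.exp_le_one_iff.2 (by nlinarith [hz.1])
    have h3 : 0 ≤ ∑ i, p i * X 0 z i ^ 2 :=
      Finset.sum_nonneg fun i _ => mul_nonneg (hPpos i).le (sq_nonneg _)
    exact (mul_le_of_le_one_left h3 h2).trans h1
  apply iss_final _ _ _ _ _ μ α χ t hm hM hχ
  · exact intervalIntegral.integral_nonneg zero_le_one
      fun z _ => Finset.sum_nonneg fun i _ => sq_nonneg _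
  · exact intervalIntegral.integral_nonneg ht.1 fun s _ =>
      intervalIntegral.integral_nonneg zero_le_one
        fun z _ => Finset.sum_nonneg fun i _ => sq_nonneg _
  · have e1 : ∀ z, Real.exp (-μ * z) * (Real.exp (α * t) * ∑ i, p i * X t z i ^ 2)
        = Real.exp (α * t) * (Real.exp (-μ * z) * ∑ i, p i * X t z i ^ 2) := fun z => by ring
    simp only [e1, intervalIntegral.integral_const_mul, mul_zero, Real.exp_zero, one_mul] at key
    have := mul_le_mul_of_nonneg_left lower (Real.exp_pos (α * t)).le
    linarith
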